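/- Let p ≥ 3 be a prime and X a circulant scheme on a cyclic group G of order p^n, and let 𝔖 = U/L ∈ 𝔖₀(X). If the circulant scheme X_𝔖 is a nontrivial wreath product, then X is a nontrivial wreath product. -/

import Mathlib

open Set

universe u

/-- A coherent configuration on a finite set `Ω`: a partition `S` of `Ω × Ω`
satisfying (C1) the diagonal is a union of classes, (C2) closure under converse,
(C3) well-defined intersection numbers. -/
structure CohCfg (Ω : Type u) : Type u where
  S : Set (Set (Ω × Ω))
  finite : Finite Ω
  cover : ∀ p : Ω × Ω, ∃ s ∈ S, p ∈ s
  disj : ∀ s ∈ S, ∀ t ∈ S, s ≠ t → s ∩ t = ∅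
  nonemp : ∀ s ∈ S, s.Nonempty
  diag : ∀ s ∈ S, (∃ p ∈ s, p.1 = p.2) → ∀ p ∈ s, p.1 = p.2
  conv : ∀ s ∈ S, {p : Ω × Ω | (p.2, p.1) ∈ s} ∈ S
  inum : ∀ r ∈ S, ∀ s ∈ S, ∀ t ∈ S, ∀ p ∈ t, ∀ q ∈ t,
    {γ : Ω | (p.1, γ) ∈ r ∧ (γ, p.2) ∈ s}.ncard =
    {γ : Ω | (q.1, γ) ∈ r ∧ (γ, q.2) ∈ s}.ncard

namespace CohCfg

variable {Ω Ω' : Type u}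

/-- The intersection number `c^t_{rs}` computed at the pair `p`. -/
noncomputable def cnum (r s : Set (Ω × Ω)) (p : Ω × Ω) : ℕ :=
  {γ : Ω | (p.1, γ) ∈ r ∧ (γ, p.2) ∈ s}.ncard

/-- `X` is a scheme (homogeneous) if the full diagonal is a basis relation. -/
def IsScheme (X : CohCfg Ω) : Prop := {p : Ω × Ω | p.1 = p.2} ∈ X.S

/-- Commutativity: `c^t_{rs} = c^t_{sr}`. -/
def IsCommutative (X : CohCfg Ω) : Prop :=
  ∀ r ∈ X.S, ∀ s ∈ X.S, ∀ p : Ω × Ω, cnum r s p = cnum s r p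

/-- `s` is a relation of `X`, i.e. a union of basis relations. -/
def IsRelationOf (X : CohCfg Ω) (s : Set (Ω × Ω)) : Prop :=
  ∀ t ∈ X.S, (t ∩ s).Nonempty → t ⊆ s

/-- `X ≤ Y`: every (basis) relation of `X` is a relation of `Y`. -/
def le (X Y : CohCfg Ω) : Prop := ∀ s ∈ X.S, IsRelationOf Y s

/-- The diagonal relation `1_Δ` of a subset `Δ`. -/
def diagRel (Δ : Set Ω) : Set (Ω × Ω) := {p | p.1 = p.2 ∧ p.1 ∈ Δ}

/-- `Δ` is a fiber of `X`. -/
def IsFiber (X : CohCfg Ω) (Δ : Set Ω) : Prop := diagRel Δ ∈ X.S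

/-- `αs = {β | (α,β) ∈ s}`. -/
def pointSet (s : Set (Ω × Ω)) (α : Ω) : Set Ω := {β | (α, β) ∈ s}

/-- `X` is partly regular: some point `α` has `|αs| ≤ 1` for all basis relations. -/
def PartlyRegular (X : CohCfg Ω) : Prop :=
  ∃ α : Ω, ∀ s ∈ X.S, (pointSet s α).ncard ≤ 1

/-- The image `s^f` of a relation under a map of points. -/
def relImage (f : Ω → Ω') (s : Set (Ω × Ω)) : Set (Ω' × Ω') :=
  (fun p : Ω × Ω => (f p.1, f p.2)) '' s

/-- `φ` is an algebraic isomorphism from `X` to `X'`. -/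
structure IsAlgIso (X : CohCfg Ω) (X' : CohCfg Ω')
    (φ : Set (Ω × Ω) → Set (Ω' × Ω')) : Prop where
  bijOn : Set.BijOn φ X.S X'.S
  cnum_eq : ∀ r ∈ X.S, ∀ s ∈ X.S, ∀ t ∈ X.S, ∀ p ∈ t, ∀ q ∈ φ t,
    cnum r s p = cnum (φ r) (φ s) q

/-- The natural extension of an algebraic isomorphism to unions of basis relations. -/
def algImage (X : CohCfg Ω) (φ : Set (Ω × Ω) → Set (Ω' × Ω')) (s : Set (Ω × Ω)) :
    Set (Ω' × Ω') := ⋃₀ (φ '' {t | t ∈ X.S ∧ t ⊆ s})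

/-- The image `Δ^φ` of a fiber under an algebraic isomorphism. -/
def fiberImage (X : CohCfg Ω) (φ : Set (Ω × Ω) → Set (Ω' × Ω')) (Δ : Set Ω) : Set Ω' :=
  {α' | (α', α') ∈ φ (diagRel Δ)}

/-- `Y` is the point extension `X_α`: the smallest coherent configuration `≥ X`
having `1_α` as a basis relation. -/
def IsPointExt (X : CohCfg Ω) (α : Ω) (Y : CohCfg Ω) : Prop :=
  le X Y ∧ ({(α, α)} : Set (Ω × Ω)) ∈ Y.S ∧
    ∀ Z : CohCfg Ω, le X Z → ({(α, α)} : Set (Ω × Ω)) ∈ Z.S → le Y Z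

/-- `φ` has an `(α,α')`-extension: an algebraic isomorphism `X_α → X'_{α'}`
extending `φ` and sending `1_α` to `1_{α'}`. -/
def HasExtension (X : CohCfg Ω) (X' : CohCfg Ω') (φ : Set (Ω × Ω) → Set (Ω' × Ω'))
    (α : Ω) (α' : Ω') : Prop :=
  ∃ (Y : CohCfg Ω) (Y' : CohCfg Ω') (ψ : Set (Ω × Ω) → Set (Ω' × Ω')),
    IsPointExt X α Y ∧ IsPointExt X' α' Y' ∧ IsAlgIso Y Y' ψ ∧
    (∀ s ∈ X.S, algImage Y ψ s = φ s) ∧ ψ {(α, α)} = {(α', α')}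

/-- A sesquiclosed algebraic isomorphism: has an `(α,α')`-extension for all
`α ∈ Δ ∈ F(X)` and `α' ∈ Δ^φ`. -/
def SesquiclosedIso (X : CohCfg Ω) (X' : CohCfg Ω')
    (φ : Set (Ω × Ω) → Set (Ω' × Ω')) : Prop :=
  IsAlgIso X X' φ ∧
  ∀ Δ : Set Ω, IsFiber X Δ → ∀ α ∈ Δ, ∀ α' ∈ fiberImage X φ Δ, HasExtension X X' φ α α'

/-- `φ` is induced by the combinatorial isomorphism `f`. -/
def InducedBy (X : CohCfg Ω) (X' : CohCfg Ω') (φ : Set (Ω × Ω) → Set (Ω' × Ω'))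
    (f : Ω → Ω') : Prop :=
  Function.Bijective f ∧ ∀ s ∈ X.S, φ s = relImage f s

/-- `X` is separable: every algebraic isomorphism from `X` is induced by an isomorphism. -/
def Separable (X : CohCfg Ω) : Prop :=
  ∀ (Ω'' : Type u) (X' : CohCfg Ω'') (φ : Set (Ω × Ω) → Set (Ω'' × Ω'')),
    IsAlgIso X X' φ → ∃ f : Ω → Ω'', InducedBy X X' φ f

/-- `X` is sesquiseparable: every sesquiclosed algebraic isomorphism from `X`
is induced by an isomorphism. -/
def Sesquiseparable (X : CohCfg Ω) : Prop :=
  ∀ (Ω'' : Type u) (X' : CohCfg Ω'') (φ : Set (Ω × Ω) → Set (Ω'' × Ω'')),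
    SesquiclosedIso X X' φ → ∃ f : Ω → Ω'', InducedBy X X' φ f

/-- A sesquiclosed coherent configuration: (S1) the fibers of every one-point
extension `X_α` are the nonempty sets `αs`, and (S2) the identity algebraic
automorphism is sesquiclosed. -/
def SesquiclosedCfg (X : CohCfg Ω) : Prop :=
  (∀ α : Ω, ∀ Y : CohCfg Ω, IsPointExt X α Y →
     ∀ Δ : Set Ω, (IsFiber Y Δ ↔ ∃ s ∈ X.S, Δ = pointSet s α ∧ Δ.Nonempty)) ∧
  SesquiclosedIso X X id

/-- A parabolic of `X`: a relation that is an equivalence relation on `Ω`. -/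
def IsParabolic (X : CohCfg Ω) (e : Set (Ω × Ω)) : Prop :=
  IsRelationOf X e ∧ (∀ a : Ω, (a, a) ∈ e) ∧ (∀ p ∈ e, (p.2, p.1) ∈ e) ∧
    ∀ a b c : Ω, (a, b) ∈ e → (b, c) ∈ e → (a, c) ∈ e

/-- The class of `a` modulo the equivalence relation `e`. -/
def eClass (e : Set (Ω × Ω)) (a : Ω) : Set Ω := {b | (a, b) ∈ e}

/-- `Δ/e` is a section of `X`: `e` is a parabolic and `Δ` is a class of a
parabolic containing `e`. -/
def IsSection (X : CohCfg Ω) (Δ : Set Ω) (e : Set (Ω × Ω)) : Prop :=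
  IsParabolic X e ∧ ∃ d : Set (Ω × Ω), IsParabolic X d ∧ e ⊆ d ∧ ∃ a : Ω, Δ = eClass d a

/-- The point set of the section `Δ/e`: the `e`-classes of points of `Δ`. -/
abbrev Sec (Δ : Set Ω) (e : Set (Ω × Ω)) : Type u :=
  {Γ : Set Ω // ∃ a ∈ Δ, Γ = eClass e a}

/-- The relation `s_𝔖` on the section `𝔖 = Δ/e`. -/
def secRel (Δ : Set Ω) (e : Set (Ω × Ω)) (s : Set (Ω × Ω)) :
    Set (Sec Δ e × Sec Δ e) :=
  {p | ∃ a ∈ p.1.1, ∃ b ∈ p.2.1, (a, b) ∈ s}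

/-- `Y` is the coherent configuration `X_𝔖` on the section `𝔖 = Δ/e`. -/
def IsSectionCfg (X : CohCfg Ω) (Δ : Set Ω) (e : Set (Ω × Ω))
    (Y : CohCfg (Sec Δ e)) : Prop :=
  Y.S = {t | ∃ s ∈ X.S, t = secRel Δ e s ∧ t.Nonempty}

/-- The restriction `s_Δ` of a relation to a subset `Δ`. -/
def restRel (Δ : Set Ω) (s : Set (Ω × Ω)) : Set (↥Δ × ↥Δ) := {p | (p.1.1, p.2.1) ∈ s}

/-- `Y` is the restriction `X_Δ` of `X` to `Δ`. -/
def IsRestrictionCfg (X : CohCfg Ω) (Δ : Set Ω) (Y : CohCfg ↥Δ) : Prop :=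
  Y.S = {t | ∃ s ∈ X.S, t = restRel Δ s ∧ t.Nonempty}

/-- `Iso(X, X', φ)`: isomorphisms inducing the algebraic isomorphism `φ`. -/
def IsoSet (X : CohCfg Ω) (X' : CohCfg Ω') (φ : Set (Ω × Ω) → Set (Ω' × Ω')) :
    Set (Ω → Ω') :=
  {f | Function.Bijective f ∧ ∀ s ∈ X.S, relImage f s = φ s}

/-- `X` is schurian: its basis relations are the orbits of `Aut(X)` on `Ω × Ω`. -/
def Schurian (X : CohCfg Ω) : Prop :=
  ∀ s ∈ X.S, ∀ p ∈ s, ∀ q ∈ s, ∃ f : Ω → Ω,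
    (Function.Bijective f ∧ ∀ t ∈ X.S, relImage f t = t) ∧ (f p.1, f p.2) = q

/-- `e ⊆ rad(s)`: `s` is a union of products of pairs of `e`-classes it meets. -/
def RadGE (e s : Set (Ω × Ω)) : Prop :=
  ∀ p ∈ s, ∀ a b : Ω, (p.1, a) ∈ e → (p.2, b) ∈ e → (a, b) ∈ s

/-- The `e₁/e₀`-condition: every basis relation disjoint from `e₁` has `e₀` in
its radical. -/
def WedgeCond (X : CohCfg Ω) (e0 e1 : Set (Ω × Ω)) : Prop :=
  ∀ s ∈ X.S, s ∩ e1 = ∅ → RadGE e0 s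

/-- A circulant coherent configuration on a group `G`: right translations are
automorphisms. -/
def IsCirculant {G : Type u} [Group G] (X : CohCfg G) : Prop :=
  ∀ g : G, ∀ s ∈ X.S, relImage (fun x => x * g) s = s

/-- The equivalence relation `e(H)` whose classes are the cosets of `H`. -/
def eRelSet {G : Type u} [Group G] (H : Subgroup G) : Set (G × G) :=
  {p | p.1⁻¹ * p.2 ∈ H}

/-- `H` is an `X`-group. -/
def IsXGroup {G : Type u} [Group G] (X : CohCfg G) (H : Subgroup G) : Prop :=
  IsParabolic X (eRelSet H)

/-- A normal circulant scheme: every automorphism fixing the identity is a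
group automorphism. -/
def IsNormalCirc {G : Type u} [Group G] (X : CohCfg G) : Prop :=
  ∀ f : G → G, Function.Bijective f → (∀ s ∈ X.S, relImage f s = s) → f 1 = 1 →
    ∀ a b : G, f (a * b) = f a * f b

/-- Normality of a circulant scheme presented on a section `Δ/e` of a group `G`
(the points are cosets): every automorphism fixing the class of `1` respects the
coset multiplication. -/
def IsNormalSec {G : Type u} [Group G] (Δ : Set G) (e : Set (G × G))
    (Y : CohCfg (Sec Δ e)) : Prop :=
  ∀ F : Sec Δ e → Sec Δ e, Function.Bijective F → (∀ t ∈ Y.S, relImage F t = t) →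
    (∀ Γ : Sec Δ e, (1 : G) ∈ Γ.1 → F Γ = Γ) →
    ∀ Γ Γ' Γ'' : Sec Δ e, Γ''.1 = Set.image2 (· * ·) Γ.1 Γ'.1 →
      (F Γ'').1 = Set.image2 (· * ·) (F Γ).1 (F Γ').1

/-- Normality of a circulant scheme presented on (the subtype of) a subgroup `U ⊆ G`. -/
def IsNormalRest {G : Type u} [Group G] (U : Set G) (Y : CohCfg ↥U) : Prop :=
  ∀ F : ↥U → ↥U, Function.Bijective F → (∀ t ∈ Y.S, relImage F t = t) →
    (∀ x : ↥U, x.1 = 1 → F x = x) →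
    ∀ x y z : ↥U, z.1 = x.1 * y.1 → (F z).1 = (F x).1 * (F y).1

/-- `N` is an `X_U`-group: `N ≤ U` and the restriction of `e(N)` to `U` is a
relation of the restriction `X_U`. -/
def SubXGroup {G : Type u} [Group G] (X : CohCfg G) (U N : Subgroup G) : Prop :=
  N ≤ U ∧ ∀ s ∈ X.S, (∃ p ∈ s, p.1 ∈ U ∧ p.2 ∈ U ∧ p.1⁻¹ * p.2 ∈ N) →
    ∀ p ∈ s, p.1 ∈ U → p.2 ∈ U → p.1⁻¹ * p.2 ∈ N

end CohCfg

/-!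
Identify `X` with the Schur partition of `G` whose classes are the sets of all `x` with `(1, x)` in
a given basis relation. Such a partition is invariant under `MulAut G`, and taking `p`-th powers
while counting modulo `p` sends unions of classes to unions of classes.

If the class of `x` has trivial radical, lies in `⟨x⟩` and avoids some nontrivial `A`-subgroup,
then, by averaging over `MulAut G`, `x` is the only element of `x⟨x ^ p⟩` in its class. Applied
modulo the radical `R` of a class outside `K` that is not `K`-invariant, this isolates a generator
`x` of the group spanned by that class, hence also its powers `x ^ p ^ i`, modulo `R`. One of these
powers lies in `U` and outside `K`, where the wreath product condition in `U/L` moves it along all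
of `K` modulo `L`. Hence `K` is contained in the larger of `R` and `L`, although both are proper
subgroups of `K`.
-/

section PGroup

theorem mem_zpowers_pow_of_coprime {p : ℕ} {G : Type*} [Group G] (hG : IsPGroup p G) {a : ℕ}
    (ha : p.Coprime a) (x : G) : x ∈ Subgroup.zpowers (x ^ a) :=
  mem_zpowers_pow_iff.2 (hG.orderOf_coprime ha x).symm

theorem exists_mulAut_forall_apply_eq_pow {p : ℕ} {G : Type*} [CommGroup G] (hG : IsPGroup p G)
    {a : ℕ} (ha : p.Coprime a) : ∃ σ : MulAut G, ∀ y, σ y = y ^ a :=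
  ⟨MulEquiv.ofBijective (powMonoidHom a) (hG.powEquiv ha).bijective, fun _ => rfl⟩

theorem exists_pow_notMem_pow_succ_mem {p : ℕ} {G : Type*} [Group G] (hG : IsPGroup p G)
    {K : Subgroup G} {x : G} (hx : x ∉ K) :
    ∃ i : ℕ, x ^ p ^ i ∉ K ∧ x ^ p ^ (i + 1) ∈ K := by
  classical
  have hex : ∃ i, x ^ p ^ i ∈ K := by
    obtain ⟨i, hi⟩ := hG x
    exact ⟨i, hi ▸ K.one_mem⟩
  obtain ⟨i, hi⟩ : ∃ i, Nat.find hex = i + 1 := Nat.exists_eq_succ_of_ne_zero fun h =>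
    hx (by simpa only [h, pow_zero, pow_one] using Nat.find_spec hex)
  exact ⟨i, Nat.find_min hex (by lia), hi ▸ Nat.find_spec hex⟩

variable {p : ℕ} [Fact p.Prime]

theorem exists_coprime_pow_eq {G : Type*} [Group G] (hG : IsPGroup p G) {x y : G}
    (hy : y ∈ Subgroup.zpowers x) (hy' : y ∉ Subgroup.zpowers (x ^ p)) :
    ∃ a : ℕ, p.Coprime a ∧ x ^ a = y := by
  obtain ⟨a, rfl⟩ := (hG.isOfFinOrder (NeZero.ne p) x).mem_powers_iff_mem_zpowers.2 hy
  refine ⟨a, ((Fact.out : p.Prime).coprime_iff_not_dvd).2 ?_, rfl⟩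
  rintro ⟨b, rfl⟩
  exact hy' (by simpa only [pow_mul] using Subgroup.npow_mem_zpowers (x ^ p) b)

theorem exists_zpowers_eq_zpowers_pow {G : Type*} [Group G] (hG : IsPGroup p G) {x y : G}
    (hy : y ∈ Subgroup.zpowers x) :
    ∃ i : ℕ, Subgroup.zpowers y = Subgroup.zpowers (x ^ p ^ i) := by
  have hp : p.Prime := Fact.out
  obtain ⟨a, rfl⟩ := (hG.isOfFinOrder (NeZero.ne p) x).mem_powers_iff_mem_zpowers.2 hy
  rcases eq_or_ne a 0 with rfl | ha
  · obtain ⟨i, hi⟩ := hG x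
    exact ⟨i, by simp only [pow_zero, hi]⟩
  · obtain ⟨i, b, hb, rfl⟩ := Nat.exists_eq_pow_mul_and_not_dvd ha p hp.ne_one
    refine ⟨i, le_antisymm ?_ ?_⟩ <;> simp only [pow_mul, Subgroup.zpowers_le]
    · exact Subgroup.npow_mem_zpowers _ b
    · exact mem_zpowers_pow_of_coprime hG ((hp.coprime_iff_not_dvd).2 hb) _

theorem exists_mem_zpowers_pow_eq_one {G : Type*} [Group G] (hG : IsPGroup p G) {w : G}
    (hw : w ≠ 1) : ∃ e ∈ Subgroup.zpowers w, e ≠ 1 ∧ e ^ p = 1 := by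
  have hpw : orderOf (w ^ (orderOf w / p)) = p :=
    orderOf_pow_orderOf_div (hG.isOfFinOrder (NeZero.ne p) w).orderOf_pos.ne' (hG.dvd_orderOf hw)
  refine ⟨w ^ (orderOf w / p), Subgroup.npow_mem_zpowers w _, fun h => ?_,
    orderOf_dvd_iff_pow_eq_one.1 hpw.dvd⟩
  exact (Fact.out : p.Prime).ne_one (by rw [← hpw, h, orderOf_one])

theorem exists_mulAut_apply_eq {G : Type*} [CommGroup G] (hG : IsPGroup p G) {x y : G}
    (hy : y ∈ Subgroup.zpowers x) (hy' : y ∉ Subgroup.zpowers (x ^ p)) :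
    ∃ σ : MulAut G, σ x = y := by
  obtain ⟨a, ha, rfl⟩ := exists_coprime_pow_eq hG hy hy'
  exact (exists_mulAut_forall_apply_eq_pow hG ha).imp fun σ hσ => hσ x

variable {G : Type*} [Group G] [IsCyclic G]

theorem subgroup_le_total (hG : IsPGroup p G) (H K : Subgroup G) : H ≤ K ∨ K ≤ H := by
  obtain ⟨g, hg⟩ := IsCyclic.exists_generator (α := G)
  refine or_iff_not_imp_left.2 fun hHK => ?_
  obtain ⟨x, hxH, hxK⟩ := SetLike.not_le_iff_exists.1 hHK
  intro y hy
  obtain ⟨i, hi⟩ := exists_zpowers_eq_zpowers_pow hG (hg x)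
  obtain ⟨j, hj⟩ := exists_zpowers_eq_zpowers_pow hG (hg y)
  have powers_le {k l : ℕ} (h : k ≤ l) :
      Subgroup.zpowers (g ^ p ^ l) ≤ Subgroup.zpowers (g ^ p ^ k) := by
    obtain ⟨d, rfl⟩ := Nat.exists_eq_add_of_le h
    rw [Subgroup.zpowers_le, pow_add, pow_mul]
    exact Subgroup.npow_mem_zpowers _ _
  rcases le_total i j with h | h
  · have hyx : Subgroup.zpowers y ≤ Subgroup.zpowers x := hi ▸ hj ▸ powers_le h
    exact Subgroup.zpowers_le.2 hxH (hyx (Subgroup.mem_zpowers y))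
  · have hxy : Subgroup.zpowers x ≤ Subgroup.zpowers y := hi ▸ hj ▸ powers_le h
    exact absurd (Subgroup.zpowers_le.2 hy (hxy (Subgroup.mem_zpowers x))) hxK

theorem le_zpowers_pow_of_notMem (hG : IsPGroup p G) {H : Subgroup G} {x : G} (hx : x ∉ H) :
    H ≤ Subgroup.zpowers (x ^ p) := by
  intro y hy
  have hyx : y ∈ Subgroup.zpowers x :=
    (subgroup_le_total hG _ _).resolve_left (fun h => hx (h (Subgroup.mem_zpowers x))) hy
  by_contra hy'
  obtain ⟨a, ha, rfl⟩ := exists_coprime_pow_eq hG hyx hy'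
  exact hx (Subgroup.zpowers_le.2 hy (mem_zpowers_pow_of_coprime hG ha x))

theorem mem_of_pow_eq_one_of_ne_bot (hG : IsPGroup p G) {H : Subgroup G} {e : G}
    (he : e ^ p = 1) (hH : H ≠ ⊥) : e ∈ H := by
  by_contra h
  refine hH (eq_bot_iff.2 ((le_zpowers_pow_of_notMem hG h).trans ?_))
  rw [he, Subgroup.zpowers_one_eq_bot]

end PGroup

section CyclicGroup

variable {G : Type*} [Group G] [IsCyclic G]

theorem exists_forall_mulAut_apply_eq_pow [Finite G] (σ : MulAut G) :
    ∃ m : ℕ, (Nat.card G).Coprime m ∧ ∀ y, σ y = y ^ m := by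
  obtain ⟨g, hg⟩ := IsCyclic.exists_generator (α := G)
  obtain ⟨m, hm : g ^ m = σ g⟩ := mem_powers_iff_mem_zpowers.2 (hg (σ g))
  refine ⟨m, ?_, fun y => ?_⟩
  · rw [← orderOf_eq_card_of_forall_mem_zpowers hg, Nat.coprime_comm, Nat.coprime_iff_gcd_eq_one,
      ← mem_zpowers_pow_iff, hm]
    obtain ⟨k, hk⟩ := hg (σ.symm g)
    exact ⟨k, by simpa using congrArg σ hk⟩
  · obtain ⟨k, rfl⟩ := mem_powers_iff_mem_zpowers.2 (hg y)
    simp only [map_pow, ← hm, ← pow_mul, mul_comm]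

theorem mulAut_apply_mem_iff [Finite G] (σ : MulAut G) (H : Subgroup G) {y : G} :
    σ y ∈ H ↔ y ∈ H := by
  have apply_mem (τ : MulAut G) {z : G} (hz : z ∈ H) : τ z ∈ H := by
    obtain ⟨m, -, hm⟩ := exists_forall_mulAut_apply_eq_pow τ
    exact hm z ▸ H.pow_mem hz m
  exact ⟨fun h => by simpa using apply_mem σ⁻¹ h, apply_mem σ⟩

end CyclicGroup

section PowerOrbit

theorem prime_pow_dvd_succ_pow_sub_one_iff {p a : ℕ} (hp : p.Prime) (hp2 : p ≠ 2) (ha : p ∣ a)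
    (k e : ℕ) : p ^ k ∣ (a + 1) ^ e - 1 ↔ p ^ k ∣ a * e := by
  have hndvd : ¬p ∣ a + 1 := fun h => hp.one_lt.ne' (Nat.dvd_one.1 ((Nat.dvd_add_right ha).1 h))
  have h := Nat.emultiplicity_pow_sub_pow hp (hp.odd_of_ne_two hp2) (x := a + 1) (y := 1)
    (by simpa using ha) hndvd e
  rw [one_pow, Nat.add_sub_cancel, ← emultiplicity_mul (Nat.prime_iff.1 hp)] at h
  simp only [pow_dvd_iff_le_emultiplicity, h]

variable {p a : ℕ} [Fact p.Prime] {G : Type*} [Group G]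

theorem pow_succ_pow_eq_self_iff (hG : IsPGroup p G) (hp2 : p ≠ 2) (ha : p ∣ a) (x : G)
    (e : ℕ) : x ^ (a + 1) ^ e = x ↔ orderOf (x ^ a) ∣ e := by
  obtain ⟨k, hk⟩ := IsPGroup.iff_orderOf.1 hG x
  have hpos : (a + 1) ^ e - 1 + 1 = (a + 1) ^ e := Nat.sub_add_cancel (Nat.one_le_pow' e a)
  calc x ^ (a + 1) ^ e = x ↔ x ^ ((a + 1) ^ e - 1) = 1 := by
        rw [← hpos, pow_succ, mul_eq_right, hpos]
    _ ↔ p ^ k ∣ a * e := by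
      rw [← orderOf_dvd_iff_pow_eq_one, hk,
        prime_pow_dvd_succ_pow_sub_one_iff Fact.out hp2 ha]
    _ ↔ orderOf (x ^ a) ∣ e := by
      rw [orderOf_dvd_iff_pow_eq_one, ← pow_mul, ← orderOf_dvd_iff_pow_eq_one, hk]

theorem injOn_pow_succ_pow (hG : IsPGroup p G) (hp2 : p ≠ 2) (ha : p ∣ a) (x : G) :
    InjOn (fun c : ℕ => x ^ (a + 1) ^ c) (Iio (orderOf (x ^ a))) := by
  have hiter (c : ℕ) : (fun z : G => z ^ (a + 1))^[c] x = x ^ (a + 1) ^ c := by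
    rw [pow_iterate]
  have hperiod : Function.minimalPeriod (fun z : G => z ^ (a + 1)) x = orderOf (x ^ a) :=
    Nat.dvd_right_iff_eq.1 fun e => by
      rw [← Function.isPeriodicPt_iff_minimalPeriod_dvd, Function.IsPeriodicPt,
        Function.IsFixedPt, hiter, pow_succ_pow_eq_self_iff hG hp2 ha]
  simpa only [hperiod, hiter] using
    Function.iterate_injOn_Iio_minimalPeriod (f := fun z : G => z ^ (a + 1)) (x := x)

theorem exists_pow_succ_pow_eq_mul (hG : IsPGroup p G) (hp2 : p ≠ 2) (ha : p ∣ a) {x w : G}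
    (hw : w ∈ Subgroup.zpowers (x ^ a)) : ∃ c : ℕ, x ^ (a + 1) ^ c = x * w := by
  have hmem (c : ℕ) : x⁻¹ * x ^ (a + 1) ^ c ∈ Subgroup.zpowers (x ^ a) := by
    obtain ⟨d, hd⟩ : a ∣ (a + 1) ^ c - 1 := by
      simpa only [Nat.add_sub_cancel] using Nat.sub_one_dvd_pow_sub_one (a + 1) c
    rw [(Nat.sub_eq_iff_eq_add' (Nat.one_le_pow' c a)).1 hd, pow_add, pow_one,
      inv_mul_cancel_left, pow_mul]
    exact Subgroup.npow_mem_zpowers _ d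
  have : Finite (Subgroup.zpowers (x ^ a)) :=
    finite_zpowers.2 (hG.isOfFinOrder (NeZero.ne p) (x ^ a))
  let orbit (c : Fin (orderOf (x ^ a))) : Subgroup.zpowers (x ^ a) :=
    ⟨x⁻¹ * x ^ (a + 1) ^ (c : ℕ), hmem c⟩
  have horbit : Function.Injective orbit := fun c d h => Fin.ext <|
    injOn_pow_succ_pow hG hp2 ha x c.2 d.2 (mul_left_cancel (Subtype.ext_iff.1 h))
  obtain ⟨c, hc⟩ := ((Nat.bijective_iff_injective_and_card orbit).2
    ⟨horbit, by rw [Nat.card_fin, Nat.card_zpowers]⟩).2 ⟨w, hw⟩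
  exact ⟨c, inv_mul_eq_iff_eq_mul.1 (Subtype.ext_iff.1 hc)⟩

end PowerOrbit

/-- A *Schur partition* of the finite group `G`, that is, the partition into basic sets of a Schur
ring. The partition is encoded by a class map `κ`, whose nonempty fibres are the classes: `{1}` is
a class, classes are permuted by inversion, and the number of ways to write `x` as a product of an
element of the class of `a` and an element of the class of `b` depends only on the class of `x`. -/
structure IsSchurPartition {G ι : Type*} [Group G] (κ : G → ι) : Prop where
  eq_one_of_eq : ∀ ⦃x : G⦄, κ x = κ 1 → x = 1
  inv_eq_inv : ∀ ⦃x y : G⦄, κ x = κ y → κ x⁻¹ = κ y⁻¹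
  ncard_eq : ∀ ⦃x y : G⦄, κ x = κ y → ∀ a b : G,
    {g | κ g = κ a ∧ κ (g⁻¹ * x) = κ b}.ncard = {g | κ g = κ a ∧ κ (g⁻¹ * y) = κ b}.ncard

/-- `S` is a union of classes of the partition with class map `κ`; for a Schur partition such an
`S` is called an `A`-set, and an `A`-subgroup if it is a subgroup. -/
def IsUnionOfClasses {G ι : Type*} (κ : G → ι) (S : Set G) : Prop :=
  ∀ ⦃x y : G⦄, κ x = κ y → x ∈ S → y ∈ S

theorem isUnionOfClasses_setOf_eq {G ι : Type*} (κ : G → ι) (x : G) :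
    IsUnionOfClasses κ {t | κ t = κ x} :=
  fun _ _ hst hs => hst.symm.trans hs

namespace IsSchurPartition

section Group

variable {G ι : Type*} [Group G] [Finite G] {κ : G → ι} {x y : G}

theorem exists_perm (h : IsSchurPartition κ) (hxy : κ x = κ y) :
    ∃ σ : Equiv.Perm G, ∀ g, κ (σ g) = κ g ∧ κ ((σ g)⁻¹ * y) = κ (g⁻¹ * x) := by
  let type (z g : G) : ι × ι := (κ g, κ (g⁻¹ * z))
  have equiv (c : ι × ι) : Nonempty ({g // type x g = c} ≃ {g // type y g = c}) := by
    refine Finite.card_eq.1 ?_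
    by_cases hc : ∃ a b, (κ a, κ b) = c
    · obtain ⟨a, b, rfl⟩ := hc
      simp only [type, Prod.mk.injEq]
      exact h.ncard_eq hxy a b
    · have isEmpty (z : G) : IsEmpty {g // type z g = c} := ⟨fun g => hc ⟨_, _, g.2⟩⟩
      rw [@Nat.card_of_isEmpty _ (isEmpty x), @Nat.card_of_isEmpty _ (isEmpty y)]
  let fiberEquiv (c : ι × ι) := (equiv c).some
  exact ⟨Equiv.ofFiberEquiv fiberEquiv,
    fun g => Prod.ext_iff.1 (Equiv.ofFiberEquiv_map fiberEquiv g)⟩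

theorem exists_perm_mul (h : IsSchurPartition κ) (hxy : κ x = κ y) :
    ∃ σ : Equiv.Perm G, ∀ g, κ (σ g) = κ g ∧ κ (σ g * y) = κ (g * x) := by
  obtain ⟨σ, hσ⟩ := h.exists_perm hxy
  refine ⟨(Equiv.inv G).trans (σ.trans (Equiv.inv G)), fun g => ⟨?_, ?_⟩⟩
  · simpa using h.inv_eq_inv (hσ g⁻¹).1
  · simpa using (hσ g⁻¹).2

theorem exists_mul_eq_mul (h : IsSchurPartition κ) (hxy : κ x = κ y) (t : G) :
    ∃ s, κ s = κ t ∧ κ (s * y) = κ (t * x) := by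
  obtain ⟨σ, hσ⟩ := h.exists_perm_mul hxy
  exact ⟨σ t, hσ t⟩

theorem ncard_mul_eq (h : IsSchurPartition κ) (hxy : κ x = κ y) {A B : Set G}
    (hA : IsUnionOfClasses κ A) (hB : IsUnionOfClasses κ B) :
    {g | g ∈ A ∧ g⁻¹ * x ∈ B}.ncard = {g | g ∈ A ∧ g⁻¹ * y ∈ B}.ncard := by
  obtain ⟨σ, hσ⟩ := h.exists_perm hxy
  refine Nat.card_congr (σ.subtypeEquiv fun g => and_congr ?_ ?_)
  · exact ⟨fun hg => hA (hσ g).1.symm hg, fun hg => hA (hσ g).1 hg⟩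
  · exact ⟨fun hg => hB (hσ g).2.symm hg, fun hg => hB (hσ g).2 hg⟩

theorem sum_mul_eq [Fintype G] (h : IsSchurPartition κ) (hxy : κ x = κ y) {k : Type*}
    [NonUnitalNonAssocSemiring k] {φ ψ : G → k} (hφ : ∀ ⦃s t⦄, κ s = κ t → φ s = φ t)
    (hψ : ∀ ⦃s t⦄, κ s = κ t → ψ s = ψ t) :
    ∑ g, φ g * ψ (g⁻¹ * x) = ∑ g, φ g * ψ (g⁻¹ * y) := by
  obtain ⟨σ, hσ⟩ := h.exists_perm hxy
  refine Fintype.sum_equiv σ _ _ fun g => ?_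
  rw [hφ (hσ g).1, hψ (hσ g).2]

/-- The *Schur ring* over `k` of a Schur partition: the elements of the group algebra whose
coefficients are constant on classes. -/
def schurRing (h : IsSchurPartition κ) (k : Type*) [CommSemiring k] :
    Subalgebra k (MonoidAlgebra k G) where
  carrier := {f | ∀ ⦃s t⦄, κ s = κ t → f.coeff s = f.coeff t}
  add_mem' := by
    intro f g hf hg s t hst
    simp only [MonoidAlgebra.coeff_add, Finsupp.add_apply, hf hst, hg hst]
  mul_mem' := by
    intro f g hf hg s t hst
    cases nonempty_fintype G
    simpa [MonoidAlgebra.coeff_mul_apply_left, Finsupp.sum_fintype] using h.sum_mul_eq hst hf hg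
  algebraMap_mem' := by
    classical
    intro c s t hst
    have : s = 1 ↔ t = 1 := by
      constructor <;> rintro rfl
      exacts [h.eq_one_of_eq hst.symm, h.eq_one_of_eq hst]
    simp [Finsupp.single_apply, eq_comm (a := (1 : G)), this]

theorem mem_schurRing_iff (h : IsSchurPartition κ) {k : Type*} [CommSemiring k]
    {f : MonoidAlgebra k G} :
    f ∈ h.schurRing k ↔ ∀ ⦃s t⦄, κ s = κ t → f.coeff s = f.coeff t :=
  Iff.rfl

end Group

section CommGroup

variable {G ι : Type*} [CommGroup G] [Finite G] {κ : G → ι} {x y : G}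

/- In the Schur ring over `ZMod l`, the `l`-th power of the sum of `S` is the sum of the `l`-th
powers of the elements of `S`. -/
theorem natCast_ncard_pow_eq (h : IsSchurPartition κ) {l : ℕ} [Fact l.Prime] {S : Set G}
    (hS : IsUnionOfClasses κ S) (hxy : κ x = κ y) :
    ({s | s ∈ S ∧ s ^ l = x}.ncard : ZMod l) = {s | s ∈ S ∧ s ^ l = y}.ncard := by
  classical
  cases nonempty_fintype G
  have : CharP (MonoidAlgebra (ZMod l) G) l := charP_of_injective_algebraMap
    (R := ZMod l) (FaithfulSMul.algebraMap_injective _ _) l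
  let f : MonoidAlgebra (ZMod l) G := ∑ s ∈ S.toFinset, MonoidAlgebra.single s 1
  have hf : f ∈ h.schurRing (ZMod l) := by
    intro s t hst
    have : s ∈ S ↔ t ∈ S := ⟨fun hs => hS hst hs, fun ht => hS hst.symm ht⟩
    simp [f, Finsupp.single_apply, MonoidAlgebra.coeff_sum, Finsupp.finsetSum_apply, this]
  have coeff_pow (z : G) : (f ^ l).coeff z = ({s | s ∈ S ∧ s ^ l = z}.ncard : ZMod l) := by
    have : {s | s ∈ S ∧ s ^ l = z} = {s ∈ S.toFinset | s ^ l = z} := by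
      simp only [mem_toFinset, Finset.coe_filter]
    rw [sum_pow_char, this, ncard_coe_finset]
    simp [Finsupp.single_apply, MonoidAlgebra.coeff_sum, MonoidAlgebra.single_pow,
      Finsupp.finsetSum_apply]
  rw [← coeff_pow, ← coeff_pow]
  exact h.mem_schurRing_iff.1 (pow_mem hf l) hxy

theorem eq_of_pow_prime_eq (h : IsSchurPartition κ) {l : ℕ} (hl : l.Prime)
    (hc : (Nat.card G).Coprime l) (hxy : κ (x ^ l) = κ (y ^ l)) : κ x = κ y := by
  have : Fact l.Prime := ⟨hl⟩
  have pow_injective : Function.Injective fun z : G => z ^ l := (powCoprime hc).injective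
  have hx : {s | κ s = κ x ∧ s ^ l = x ^ l} = {x} := by
    ext s
    exact ⟨fun hs => pow_injective hs.2, by rintro rfl; exact ⟨rfl, rfl⟩⟩
  have hcount := h.natCast_ncard_pow_eq (l := l) (isUnionOfClasses_setOf_eq κ x) hxy
  obtain ⟨s, hs, hsy⟩ : {s | κ s = κ x ∧ s ^ l = y ^ l}.Nonempty := by
    rw [nonempty_iff_ne_empty]
    intro hy
    simp only [mem_ofPred_eq, hx, hy, ncard_singleton, ncard_empty, Nat.cast_one,
      Nat.cast_zero, one_ne_zero] at hcount
  rw [← pow_injective hsy, hs]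

theorem eq_of_pow_eq (h : IsSchurPartition κ) {m : ℕ} (hc : (Nat.card G).Coprime m)
    (hxy : κ (x ^ m) = κ (y ^ m)) : κ x = κ y := by
  induction m using Nat.recOnMul generalizing x y with
  | zero =>
    have : Subsingleton G := (Nat.card_eq_one_iff_unique.1 ((Nat.coprime_zero_right _).1 hc)).1
    rw [Subsingleton.elim x y]
  | one => simpa only [pow_one] using hxy
  | prime l hl => exact h.eq_of_pow_prime_eq hl hc hxy
  | mul a b iha ihb =>
    rw [pow_mul, pow_mul] at hxy
    exact iha (hc.coprime_mul_right_right) (ihb hc.coprime_mul_left_right hxy)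

theorem mulAut_eq_mulAut [IsCyclic G] (h : IsSchurPartition κ) (σ : MulAut G)
    (hxy : κ x = κ y) : κ (σ x) = κ (σ y) := by
  obtain ⟨m, hc, hm⟩ := exists_forall_mulAut_apply_eq_pow σ⁻¹
  exact h.eq_of_pow_eq hc (by simpa only [← hm, MulAut.inv_apply_self] using hxy)

end CommGroup

end IsSchurPartition

section Radical

open scoped Pointwise

/-- The *radical* of the class of `x`: the largest subgroup of which that class is a union of
cosets. -/
def radical {G ι : Type*} [Group G] (κ : G → ι) (x : G) : Subgroup G :=
  MulAction.stabilizer G {t | κ t = κ x}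

variable {G ι : Type*} [CommGroup G] [Finite G] {κ : G → ι} {x : G}

theorem mem_radical_iff {g : G} : g ∈ radical κ x ↔ ∀ t, κ t = κ x → κ (g * t) = κ x :=
  MulAction.mem_stabilizer_set' (toFinite _)

namespace IsSchurPartition

theorem isUnionOfClasses_radical (h : IsSchurPartition κ) (x : G) :
    IsUnionOfClasses κ (radical κ x : Set G) := by
  intro g g' hgg' hg
  refine mem_radical_iff.2 fun t ht => ?_
  obtain ⟨s, hs, hst⟩ := h.exists_mul_eq_mul hgg'.symm t
  rw [mul_comm, ← hst, mul_comm]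
  exact mem_radical_iff.1 hg s (hs.trans ht)

theorem le_radical (h : IsSchurPartition κ) {N : Subgroup G}
    (hN : IsUnionOfClasses κ (N : Set G)) (hx : ∀ n ∈ N, κ (n * x) = κ x) : N ≤ radical κ x := by
  intro n hn
  refine mem_radical_iff.2 fun t ht => ?_
  obtain ⟨s, hs, hst⟩ := h.exists_mul_eq_mul ht n
  rw [← hst, hx s (hN hs.symm hn)]

end IsSchurPartition

end Radical

section Quotient

theorem ncard_setOf_mk_mem {G : Type*} [Group G] (R : Subgroup G) (Q : Set (G ⧸ R)) :
    {g : G | (g : G ⧸ R) ∈ Q}.ncard = Nat.card R * Q.ncard := by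
  rw [← Nat.card_coe_set_eq Q, ← Nat.card_prod]
  exact Nat.card_congr (QuotientGroup.preimageMkEquivSubgroupProdSet R Q)

/-- The class map of the quotient of a partition of `G` modulo `R`: a coset is labelled by the set
of classes that it meets. -/
def quotientClass {G ι : Type*} [Group G] (κ : G → ι) (R : Subgroup G) (q : G ⧸ R) : Set ι :=
  κ '' {g | (g : G ⧸ R) = q}

namespace IsSchurPartition

variable {G ι : Type*} [CommGroup G] [Finite G] {κ : G → ι} {R : Subgroup G}

theorem quotientClass_mk_eq_iff (h : IsSchurPartition κ) (hR : IsUnionOfClasses κ (R : Set G))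
    {x y : G} : quotientClass κ R x = quotientClass κ R y ↔ ∃ z, κ z = κ x ∧ (z : G ⧸ R) = y := by
  have subset {u v : G} (huv : κ u = κ v) : quotientClass κ R u ⊆ quotientClass κ R v := by
    rintro _ ⟨w, hw, rfl⟩
    have hwR : w / u ∈ R := QuotientGroup.eq_iff_div_mem.1 hw
    obtain ⟨r, hr, hrw⟩ := h.exists_mul_eq_mul huv (w / u)
    rw [div_mul_cancel] at hrw
    refine ⟨r * v, ?_, hrw⟩
    exact QuotientGroup.eq_iff_div_mem.2 (by simpa using hR hr.symm hwR)
  constructor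
  · intro hxy
    obtain ⟨z, hz, hzx⟩ : κ x ∈ quotientClass κ R y := hxy ▸ ⟨x, rfl, rfl⟩
    exact ⟨z, hzx, hz⟩
  · rintro ⟨z, hzx, hzy⟩
    exact hzy ▸ (subset hzx.symm).antisymm (subset hzx)

theorem quotient (h : IsSchurPartition κ) (hR : IsUnionOfClasses κ (R : Set G)) :
    IsSchurPartition (quotientClass κ R) := by
  have mk_eq {x y : G} (hxy : κ x = κ y) : quotientClass κ R x = quotientClass κ R y :=
    (h.quotientClass_mk_eq_iff hR).2 ⟨y, hxy.symm, rfl⟩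
  refine ⟨?_, ?_, ?_⟩ <;> intro q <;> induction q using QuotientGroup.induction_on with | H x
  · intro hx
    obtain ⟨z, hz, hz1⟩ := (h.quotientClass_mk_eq_iff hR (y := 1)).1 hx
    exact (QuotientGroup.eq_one_iff x).2 (hR hz ((QuotientGroup.eq_one_iff z).1 hz1))
  · intro q hxq
    induction q using QuotientGroup.induction_on with | H y
    obtain ⟨z, hz, hzy⟩ := (h.quotientClass_mk_eq_iff hR).1 hxq
    rw [← hzy, ← QuotientGroup.mk_inv, ← QuotientGroup.mk_inv]
    exact mk_eq (h.inv_eq_inv hz.symm)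
  · intro q hxq a b
    induction q using QuotientGroup.induction_on with | H y
    obtain ⟨z, hz, hzy⟩ := (h.quotientClass_mk_eq_iff hR).1 hxq
    have isUnionOfClasses (c : G ⧸ R) :
        IsUnionOfClasses κ {g : G | quotientClass κ R g = quotientClass κ R c} :=
      fun _ _ hst hs => (mk_eq hst).symm.trans hs
    have hcount := h.ncard_mul_eq hz.symm (isUnionOfClasses a) (isUnionOfClasses b)
    have count_mk (u : G) := ncard_setOf_mk_mem R
      {q | quotientClass κ R q = quotientClass κ R a ∧
        quotientClass κ R (q⁻¹ * u) = quotientClass κ R b}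
    rw [← hzy]
    exact Nat.eq_of_mul_eq_mul_left Nat.card_pos
      ((count_mk x).symm.trans (hcount.trans (count_mk z)))

end IsSchurPartition

end Quotient

section Counting

theorem sum_ncard_smul_mem {A α : Type*} [Group A] [Finite A] [MulAction A α] {D : Finset α}
    (hD : ∀ (a : A) (y : α), a • y ∈ D ↔ y ∈ D) (T : Set α) :
    ∑ y ∈ D, {a : A | a • y ∈ T}.ncard = Nat.card A * {y | y ∈ D ∧ y ∈ T}.ncard := by
  classical
  cases nonempty_fintype A
  have card_eq (a : A) : (D.bipartiteAbove (fun a y => a • y ∈ T) a).card =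
      (D.filter (· ∈ T)).card :=
    Finset.card_equiv (MulAction.toPerm a) fun y => by
      simp only [Finset.mem_bipartiteAbove, Finset.mem_filter, MulAction.toPerm_apply, hD]
  calc ∑ y ∈ D, {a : A | a • y ∈ T}.ncard
      = ∑ y ∈ D, (Finset.univ.bipartiteBelow (fun (a : A) y => a • y ∈ T) y).card := by
        simp only [Set.ncard_eq_toFinset_card', Finset.bipartiteBelow, Set.toFinset_ofPred]
    _ = ∑ a : A, (D.bipartiteAbove (fun a y => a • y ∈ T) a).card :=
        (Finset.sum_card_bipartiteAbove_eq_sum_card_bipartiteBelow _).symm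
    _ = Nat.card A * {y | y ∈ D ∧ y ∈ T}.ncard := by
        rw [Finset.sum_congr rfl fun a _ => card_eq a, Finset.sum_const, Finset.card_univ,
          smul_eq_mul, Nat.card_eq_fintype_card, ← ncard_coe_finset, Finset.coe_filter]

theorem ncard_zpowers_pow_lt_ncard_sdiff {p : ℕ} [Fact p.Prime] {G : Type*} [Group G]
    (hG : IsPGroup p G) (hp2 : p ≠ 2) {x : G} (hx : x ≠ 1) :
    (Subgroup.zpowers (x ^ p) : Set G).ncard <
      ((Subgroup.zpowers x : Set G) \ Subgroup.zpowers (x ^ p)).ncard := by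
  have hpx : p ∣ orderOf x := hG.dvd_orderOf hx
  have fin (y : G) : (Subgroup.zpowers y : Set G).Finite :=
    finite_zpowers.2 (hG.isOfFinOrder (NeZero.ne p) y)
  have ncard_eq (y : G) : (Subgroup.zpowers y : Set G).ncard = orderOf y := Nat.card_zpowers y
  have order_eq : p * orderOf (x ^ p) = orderOf x := by
    rw [orderOf_pow_of_dvd (NeZero.ne p) hpx, Nat.mul_div_cancel' hpx]
  have order_pos : 0 < orderOf (x ^ p) := (hG.isOfFinOrder (NeZero.ne p) (x ^ p)).orderOf_pos
  have hp3 : 3 ≤ p := (Fact.out : p.Prime).two_le.lt_of_ne' hp2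
  rw [ncard_sdiff (Subgroup.zpowers_le.2 (Subgroup.npow_mem_zpowers x p)) (fin _), ncard_eq,
    ncard_eq, ← order_eq]
  have := Nat.mul_le_mul_right (orderOf (x ^ p)) hp3
  lia

theorem ncard_setOf_mulAut_apply {G ι : Type*} [Group G] (κ : G → ι) (c : ι) (τ : MulAut G)
    (y : G) : {σ : MulAut G | κ (σ (τ y)) = c}.ncard = {σ : MulAut G | κ (σ y) = c}.ncard :=
  Nat.card_congr ((Equiv.mulRight τ).subtypeEquiv fun _ => Iff.rfl)

theorem card_mulAut_mul_ncard_eq {G ι : Type*} [Group G] [Finite G] {κ : G → ι} {x : G}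
    {D : Finset G}
    (hD : ∀ (σ : MulAut G) (y : G), σ y ∈ D ↔ y ∈ D) (hx : ∀ y ∈ D, ∃ σ : MulAut G, σ x = y) :
    Nat.card (MulAut G) * {y | y ∈ D ∧ κ y = κ x}.ncard =
      D.card * {σ : MulAut G | κ (σ x) = κ x}.ncard := by
  refine (sum_ncard_smul_mem hD {y | κ y = κ x}).symm.trans (Finset.sum_const_nat fun y hy => ?_)
  obtain ⟨τ, rfl⟩ := hx y hy
  exact ncard_setOf_mulAut_apply κ (κ x) τ x

namespace IsSchurPartition

variable {G ι : Type*} [CommGroup G] [IsCyclic G] [Finite G] {κ : G → ι} {x : G}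

theorem ncard_setOf_mulAut_le (h : IsSchurPartition κ) (x y : G) :
    {σ : MulAut G | κ (σ y) = κ x}.ncard ≤ {σ : MulAut G | κ (σ x) = κ x}.ncard := by
  rcases eq_empty_or_nonempty {σ : MulAut G | κ (σ y) = κ x} with hempty | ⟨τ, hτ⟩
  · simp only [hempty, ncard_empty, zero_le]
  · rw [← ncard_setOf_mulAut_apply κ (κ x) τ y]
    exact ncard_le_ncard (fun σ hσ => (h.mulAut_eq_mulAut σ hτ).symm.trans hσ)

theorem card_mulAut_mul_ncard_le (h : IsSchurPartition κ) (x : G) {D : Finset G}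
    (hD : ∀ (σ : MulAut G) (y : G), σ y ∈ D ↔ y ∈ D) :
    Nat.card (MulAut G) * {y | y ∈ D ∧ κ y = κ x}.ncard ≤
      D.card * {σ : MulAut G | κ (σ x) = κ x}.ncard :=
  (sum_ncard_smul_mem hD {y | κ y = κ x}).ge.trans
    (Finset.sum_le_card_nsmul D _ _ fun y _ => h.ncard_setOf_mulAut_le x y)

/- Average over `MulAut G`: each element of `⟨x⟩` outside `⟨x ^ p⟩` has at least as many images in
the class of `x` as any other element has, and there are more than `|⟨x ^ p⟩|` such elements. -/
theorem ncard_class_inter_lt (h : IsSchurPartition κ) {p : ℕ} [Fact p.Prime] (hG : IsPGroup p G)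
    (hp2 : p ≠ 2) (hx1 : x ≠ 1) (hx : ∀ t, κ t = κ x → t ∈ Subgroup.zpowers x) :
    {t | κ t = κ x ∧ t ∈ Subgroup.zpowers (x ^ p)}.ncard <
      {t | κ t = κ x ∧ t ∉ Subgroup.zpowers (x ^ p)}.ncard := by
  classical
  cases nonempty_fintype G
  let inner : Finset G := (Subgroup.zpowers (x ^ p) : Set G).toFinset
  let outer : Finset G := ((Subgroup.zpowers x : Set G) \ Subgroup.zpowers (x ^ p)).toFinset
  have class_inner : {t | κ t = κ x ∧ t ∈ Subgroup.zpowers (x ^ p)} =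
      {t | t ∈ inner ∧ κ t = κ x} := by
    ext t
    simp [inner, and_comm]
  have class_outer : {t | κ t = κ x ∧ t ∉ Subgroup.zpowers (x ^ p)} =
      {t | t ∈ outer ∧ κ t = κ x} := by
    ext t
    have := hx t
    simp only [outer, mem_toFinset, mem_sdiff, SetLike.mem_coe, mem_ofPred_eq]
    tauto
  have card_lt : inner.card < outer.card := by
    simpa only [inner, outer, ← ncard_eq_toFinset_card'] using
      ncard_zpowers_pow_lt_ncard_sdiff hG hp2 hx1
  have stabilizer_pos : 0 < {σ : MulAut G | κ (σ x) = κ x}.ncard := by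
    rw [ncard_pos]
    exact ⟨1, rfl⟩
  rw [class_inner, class_outer]
  refine Nat.lt_of_mul_lt_mul_left (a := Nat.card (MulAut G)) ?_
  calc _ ≤ inner.card * _ :=
        h.card_mulAut_mul_ncard_le x (by simp [inner, mulAut_apply_mem_iff])
    _ < outer.card * _ := Nat.mul_lt_mul_of_pos_right card_lt stabilizer_pos
    _ = _ := (card_mulAut_mul_ncard_eq (by simp [outer, mulAut_apply_mem_iff]) fun y hy => by
        obtain ⟨hyx, hyp⟩ := mem_toFinset.1 hy
        exact exists_mulAut_apply_eq hG hyx hyp).symm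

end IsSchurPartition

end Counting

section TrivialRadical

theorem exists_mem_subset_zpowers {p : ℕ} [Fact p.Prime] {G : Type*} [Group G] [IsCyclic G]
    [Finite G] (hG : IsPGroup p G) {S : Set G} (hS : S.Nonempty) :
    ∃ x ∈ S, S ⊆ Subgroup.zpowers x := by
  obtain ⟨x, hxS, hx⟩ := S.toFinite.exists_maximalFor Subgroup.zpowers S hS
  refine ⟨x, hxS, fun y hyS => ?_⟩
  rcases subgroup_le_total hG (Subgroup.zpowers y) (Subgroup.zpowers x) with hyx | hxy
  · exact hyx (Subgroup.mem_zpowers y)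
  · exact hx hyS hxy (Subgroup.mem_zpowers y)

namespace IsSchurPartition

theorem isUnionOfClasses_zpowers {G ι : Type*} [Group G] [Finite G] {κ : G → ι} {x : G}
    (h : IsSchurPartition κ) (hx : ∀ t, κ t = κ x → t ∈ Subgroup.zpowers x) :
    IsUnionOfClasses κ (Subgroup.zpowers x : Set G) := by
  intro y z hyz hy
  obtain ⟨n, rfl : x ^ n = y⟩ := mem_powers_iff_mem_zpowers.2 hy
  induction n generalizing z with
  | zero =>
    rw [pow_zero] at hyz
    exact h.eq_one_of_eq hyz.symm ▸ one_mem (Subgroup.zpowers x)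
  | succ n ih =>
    obtain ⟨s, hs, hsz⟩ := h.exists_mul_eq_mul hyz x⁻¹
    rw [pow_succ', inv_mul_cancel_left] at hsz
    have hsx : s⁻¹ ∈ Subgroup.zpowers x := hx _ (by simpa only [inv_inv] using h.inv_eq_inv hs)
    exact ((Subgroup.zpowers x).mul_mem_cancel_left (inv_mem_iff.1 hsx)).1
      (ih hsz.symm (Subgroup.npow_mem_zpowers x n))

variable {G ι : Type*} [CommGroup G] [IsCyclic G] [Finite G] {κ : G → ι} {x y : G}
  {p : ℕ} [Fact p.Prime]

/- With `y = x ^ a` and `p ∣ a`, the automorphism `z ↦ z ^ (a + 1)` preserves the class of `x`, and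
its iterates move `x` through the whole coset `x⟨y⟩`. -/
theorem mul_zpowers_eq (h : IsSchurPartition κ) (hG : IsPGroup p G) (hp2 : p ≠ 2)
    (hy : y ∈ Subgroup.zpowers (x ^ p)) (hxy : κ (x * y) = κ x) {w : G}
    (hw : w ∈ Subgroup.zpowers y) : κ (x * w) = κ x := by
  obtain ⟨b, rfl⟩ := mem_powers_iff_mem_zpowers.2 hy
  simp only [← pow_mul] at hxy hw
  have hpa : p ∣ p * b := dvd_mul_right p b
  have coprime : p.Coprime (p * b + 1) := by simp
  obtain ⟨σ, hσ⟩ := exists_mulAut_forall_apply_eq_pow hG coprime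
  have iterate_eq (c : ℕ) : κ (x ^ (p * b + 1) ^ c) = κ x := by
    induction c with
    | zero => rw [pow_zero, pow_one]
    | succ c ih => rw [pow_succ, pow_mul, ← hσ, h.mulAut_eq_mulAut σ ih, hσ, pow_succ', hxy]
  obtain ⟨c, hc⟩ := exists_pow_succ_pow_eq_mul hG hp2 hpa hw
  rw [← hc, iterate_eq]

theorem class_mul_eq (h : IsSchurPartition κ) (hG : IsPGroup p G)
    (hx : ∀ t, κ t = κ x → t ∈ Subgroup.zpowers x) {M : Subgroup G}
    (hM : ∀ w ∈ M, κ (x * w) = κ x) {t e : G} (ht : κ t = κ x)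
    (ht' : t ∉ Subgroup.zpowers (x ^ p)) (he : e ∈ M) : κ (t * e) = κ x := by
  obtain ⟨σ, rfl⟩ := exists_mulAut_apply_eq hG (hx t ht) ht'
  have hσe : κ (x * σ⁻¹ e) = κ x := hM _ ((mulAut_apply_mem_iff σ⁻¹ M).2 he)
  simpa only [map_mul, MulAut.apply_inv_self, ht] using h.mulAut_eq_mulAut σ hσe

theorem exists_mul_class_eq (h : IsSchurPartition κ) (hG : IsPGroup p G) (hp2 : p ≠ 2)
    (hx1 : x ≠ 1) (hx : ∀ t, κ t = κ x → t ∈ Subgroup.zpowers x) {e g : G} (hge : κ g = κ e)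
    (he : ∀ t, κ t = κ x → t ∉ Subgroup.zpowers (x ^ p) → κ (t * e) = κ x) :
    ∃ t, κ t = κ x ∧ t ∉ Subgroup.zpowers (x ^ p) ∧ κ (t * g) = κ x := by
  by_contra! hne
  obtain ⟨σ, hσ⟩ := h.exists_perm_mul hge.symm
  refine (h.ncard_class_inter_lt hG hp2 hx1 hx).not_ge
    (ncard_le_ncard_of_injOn σ (fun t ⟨ht, htp⟩ => ?_) σ.injective.injOn)
  have hσt : κ (σ t) = κ x := (hσ t).1.trans ht
  exact ⟨hσt, not_imp_comm.1 (hne _ hσt) (not_not.2 ((hσ t).2.trans (he t ht htp)))⟩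

/- If `x⟨e⟩` lies in the class of `x` for some `e` of order `p`, so does `x⟨g⟩` for a generator `g`
of the `A`-subgroup generated by the class of `e`; hence `⟨g⟩` lies in the radical. -/
theorem eq_one_of_mul_eq_of_radical_eq_bot (h : IsSchurPartition κ) (hG : IsPGroup p G)
    (hp2 : p ≠ 2) (hx : ∀ t, κ t = κ x → t ∈ Subgroup.zpowers x) (hrad : radical κ x = ⊥)
    {Q : Subgroup G} (hQ : IsUnionOfClasses κ (Q : Set G)) (hQ' : Q ≠ ⊥) (hxQ : x ∉ Q)
    (hy : y ∈ Subgroup.zpowers (x ^ p)) (hxy : κ (x * y) = κ x) : y = 1 := by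
  by_contra hy1
  obtain ⟨e, hey, he1, hep⟩ := exists_mem_zpowers_pow_eq_one hG hy1
  have heQ : e ∈ Q := mem_of_pow_eq_one_of_ne_bot hG hep hQ'
  obtain ⟨g, hge, hg⟩ := exists_mem_subset_zpowers hG (S := {t | κ t = κ e}) ⟨e, rfl⟩
  have hgx : g ∈ Subgroup.zpowers (x ^ p) := le_zpowers_pow_of_notMem hG hxQ (hQ hge.symm heQ)
  have mul_e (t : G) (ht : κ t = κ x) (ht' : t ∉ Subgroup.zpowers (x ^ p)) : κ (t * e) = κ x :=
    h.class_mul_eq hG hx (fun _ => h.mul_zpowers_eq hG hp2 hy hxy) ht ht' hey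
  obtain ⟨t, ht, htp, htg⟩ := h.exists_mul_class_eq hG hp2 (ne_of_mem_of_not_mem Q.one_mem hxQ).symm
    hx hge mul_e
  obtain ⟨σ, rfl⟩ := exists_mulAut_apply_eq hG (hx t ht) htp
  have hxg : κ (x * σ⁻¹ g) = κ x := by
    have := h.mulAut_eq_mulAut σ⁻¹ (htg.trans ht.symm)
    rwa [map_mul, MulAut.inv_apply_self] at this
  have hσg : σ⁻¹ g ∈ Subgroup.zpowers g :=
    (mulAut_apply_mem_iff σ⁻¹ _).2 (Subgroup.mem_zpowers g)
  have hgσ : g ∈ Subgroup.zpowers (σ⁻¹ g) :=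
    (mulAut_apply_mem_iff σ⁻¹ _).1 (Subgroup.mem_zpowers (σ⁻¹ g))
  have zpowers_le : Subgroup.zpowers g ≤ radical κ x := by
    refine h.le_radical (h.isUnionOfClasses_zpowers fun t ht => hg (ht.trans hge)) fun w hw => ?_
    rw [mul_comm]
    exact h.mul_zpowers_eq hG hp2 ((mulAut_apply_mem_iff σ⁻¹ _).2 hgx) hxg
      (Subgroup.zpowers_le.2 hgσ hw)
  rw [hrad, Subgroup.zpowers_le, Subgroup.mem_bot] at zpowers_le
  subst zpowers_le
  exact he1 (h.eq_one_of_eq hge.symm)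

end IsSchurPartition

end TrivialRadical

section Isolated

/-- `y` is *isolated* if it is the only element of the coset `y⟨y ^ p⟩` in some union of classes.
Over a `p`-group this passes from `y` to `y ^ p`. -/
def IsIsolated {G ι : Type*} [Group G] (p : ℕ) (κ : G → ι) (y : G) : Prop :=
  ∃ S, IsUnionOfClasses κ S ∧ y ∈ S ∧ ∀ w ∈ Subgroup.zpowers (y ^ p), y * w ∈ S → w = 1

theorem IsIsolated.eq_one {G ι : Type*} [Group G] {p : ℕ} {κ : G → ι} {y w : G}
    (hy : IsIsolated p κ y) (hw : w ∈ Subgroup.zpowers (y ^ p)) (hyw : κ (y * w) = κ y) :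
    w = 1 := by
  obtain ⟨S, hS, hyS, hSy⟩ := hy
  exact hSy w hw (hS hyw.symm hyS)

namespace IsSchurPartition

variable {G ι : Type*} [CommGroup G] [Finite G] {κ : G → ι}

section Cyclic

variable [IsCyclic G] {p : ℕ} [Fact p.Prime]

theorem isIsolated_pow (h : IsSchurPartition κ) (hG : IsPGroup p G) {y : G}
    (hy : IsIsolated p κ y) (hyp : y ^ p ≠ 1) : IsIsolated p κ (y ^ p) := by
  obtain ⟨S, hS, hyS, hSy⟩ := hy
  have eq_of_pow_eq {s v : G} (hs : s ∈ S) (hv : v ∈ Subgroup.zpowers (y ^ p))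
      (hsv : s ^ p = (y * v) ^ p) : s = y := by
    have order_dvd : (s / (y * v)) ^ p = 1 := by rw [div_pow, hsv, div_self']
    have mem : s / (y * v) ∈ Subgroup.zpowers (y ^ p) :=
      mem_of_pow_eq_one_of_ne_bot hG order_dvd (Subgroup.zpowers_ne_bot.2 hyp)
    have hs_eq : y * (v * (s / (y * v))) = s := by rw [← mul_assoc, mul_div_cancel]
    rw [← hs_eq, hSy _ (mul_mem hv mem) (hs_eq.symm ▸ hs), mul_one]
  refine ⟨{z | ({s | s ∈ S ∧ s ^ p = z}.ncard : ZMod p) ≠ 0}, fun z z' hzz' hz => ?_, ?_, ?_⟩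
  · exact (h.natCast_ncard_pow_eq hS hzz').symm.trans_ne hz
  · have : {s | s ∈ S ∧ s ^ p = y ^ p} = {y} := by
      ext s
      refine ⟨fun ⟨hs, hsp⟩ => eq_of_pow_eq hs (one_mem _) (by rwa [mul_one]), ?_⟩
      rintro rfl
      exact ⟨hyS, rfl⟩
    simp only [mem_ofPred_eq, this, ncard_singleton, Nat.cast_one, ne_eq, one_ne_zero,
      not_false_eq_true]
  · intro w hw hwS
    obtain ⟨a, rfl : ((y ^ p) ^ p) ^ a = w⟩ := mem_powers_iff_mem_zpowers.2 hw
    obtain ⟨s, hs, hsp⟩ : {s | s ∈ S ∧ s ^ p = y ^ p * ((y ^ p) ^ p) ^ a}.Nonempty :=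
      nonempty_of_ncard_ne_zero fun h0 => hwS (by rw [h0, Nat.cast_zero])
    have hsy : s = y := eq_of_pow_eq hs (Subgroup.npow_mem_zpowers (y ^ p) a)
      (by rw [hsp, mul_pow, pow_right_comm (y ^ p)])
    rwa [hsy, left_eq_mul] at hsp

theorem isIsolated_pow_pow (h : IsSchurPartition κ) (hG : IsPGroup p G) {y : G}
    (hy : IsIsolated p κ y) {i : ℕ} (hyp : y ^ p ^ i ≠ 1) : IsIsolated p κ (y ^ p ^ i) := by
  induction i with
  | zero => simpa only [pow_zero, pow_one] using hy
  | succ i ih =>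
    rw [pow_succ, pow_mul] at hyp ⊢
    exact h.isIsolated_pow hG (ih fun h1 => hyp (by rw [h1, one_pow])) hyp

end Cyclic

theorem quotientClass_radical_eq_iff (h : IsSchurPartition κ) {x z : G} :
    quotientClass κ (radical κ x) z = quotientClass κ (radical κ x) x ↔ κ z = κ x := by
  rw [eq_comm, h.quotientClass_mk_eq_iff (h.isUnionOfClasses_radical x)]
  refine ⟨fun ⟨u, hu, huz⟩ => ?_, fun hz => ⟨z, hz, rfl⟩⟩
  have hmem : z / u ∈ radical κ x := QuotientGroup.eq_iff_div_mem.1 huz.symm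
  simpa only [div_mul_cancel] using mem_radical_iff.1 hmem u hu

theorem radical_quotientClass_radical (h : IsSchurPartition κ) (x : G) :
    radical (quotientClass κ (radical κ x)) (x : G ⧸ radical κ x) = ⊥ := by
  refine eq_bot_iff.2 fun q hq => ?_
  induction q using QuotientGroup.induction_on with | H g
  rw [Subgroup.mem_bot, QuotientGroup.eq_one_iff]
  exact mem_radical_iff.2 fun t ht => h.quotientClass_radical_eq_iff.1
    (mem_radical_iff.1 hq t (h.quotientClass_radical_eq_iff.2 ht))

theorem isUnionOfClasses_map_mk (h : IsSchurPartition κ) {R K : Subgroup G}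
    (hR : IsUnionOfClasses κ (R : Set G)) (hK : IsUnionOfClasses κ (K : Set G)) :
    IsUnionOfClasses (quotientClass κ R) (K.map (QuotientGroup.mk' R) : Set (G ⧸ R)) := by
  rintro _ q hq ⟨k, hk, rfl⟩
  induction q using QuotientGroup.induction_on with | H z
  obtain ⟨u, hu, huz⟩ := (h.quotientClass_mk_eq_iff hR).1 hq
  exact ⟨u, hK hu.symm hk, huz⟩

variable [IsCyclic G] {p : ℕ} [Fact p.Prime]

theorem exists_isIsolated_quotient (h : IsSchurPartition κ) (hG : IsPGroup p G) (hp2 : p ≠ 2)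
    {K : Subgroup G} (hK : IsUnionOfClasses κ (K : Set G)) {x k : G} (hx : x ∉ K) (hk : k ∈ K)
    (hxk : κ (x * k) ≠ κ x) :
    ∃ R < K, IsUnionOfClasses κ (R : Set G) ∧
      ∃ x', κ x' = κ x ∧ IsIsolated p (quotientClass κ R) (x' : G ⧸ R) := by
  obtain ⟨x', hx', hmax⟩ := exists_mem_subset_zpowers hG (S := {t | κ t = κ x}) ⟨x, rfl⟩
  have hx'K : x' ∉ K := fun hmem => hx (hK hx' hmem)
  have hR := h.isUnionOfClasses_radical x'
  have not_le : ¬K ≤ radical κ x' := fun hle => hxk <| by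
    rw [mul_comm, mem_radical_iff.1 (hle hk) x hx'.symm, hx']
  have radical_lt : radical κ x' < K :=
    ((subgroup_le_total hG _ _).resolve_right not_le).lt_of_not_ge not_le
  refine ⟨radical κ x', radical_lt, hR, x', hx', {t | quotientClass κ _ t = quotientClass κ _ x'},
    isUnionOfClasses_setOf_eq _ _, rfl, fun w hw hxw => ?_⟩
  refine (h.quotient hR).eq_one_of_mul_eq_of_radical_eq_bot (hG.to_quotient _) hp2 (fun q hq => ?_)
    (h.radical_quotientClass_radical x') (h.isUnionOfClasses_map_mk hR hK) ?_ ?_ hw hxw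
  · induction q using QuotientGroup.induction_on with | H z
    have hz : z ∈ Subgroup.zpowers x' := hmax ((h.quotientClass_radical_eq_iff.1 hq).trans hx')
    have := Subgroup.mem_map_of_mem (QuotientGroup.mk' (radical κ x')) hz
    rwa [MonoidHom.map_zpowers] at this
  · rwa [Ne, Subgroup.map_eq_bot_iff, QuotientGroup.ker_mk']
  · rintro ⟨k', hk', hkx : (k' : G ⧸ radical κ x') = x'⟩
    refine hx'K ((K.mul_mem_cancel_left (K.inv_mem hk')).1 ?_)
    exact radical_lt.le (QuotientGroup.eq.1 hkx)

end IsSchurPartition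

end Isolated

section Wreath

namespace IsSchurPartition

variable {G ι : Type*} [CommGroup G] [IsCyclic G] [Finite G] {κ : G → ι} {p : ℕ} [Fact p.Prime]

/- A class outside `K` that is not `K`-invariant gives `R < K` and an element `v` of `U` outside `K`
that is isolated modulo `R`. Being isolated, `v` can satisfy `κ (v * k * l) = κ v` only for
`k * l ∈ R`, so `K` would lie in `R` or in `L`. -/
theorem mul_eq_of_section_wreath (h : IsSchurPartition κ) (hG : IsPGroup p G) (hp2 : p ≠ 2)
    {L K U : Subgroup G} (hLK : L < K) (hKU : K < U) (hK : IsUnionOfClasses κ (K : Set G))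
    (hUK : ∀ x ∈ U, x ∉ K → ∀ k ∈ K, ∃ l ∈ L, κ (x * (k * l)) = κ x) {x k : G} (hx : x ∉ K)
    (hk : k ∈ K) : κ (x * k) = κ x := by
  by_contra hxk
  obtain ⟨R, hRK, hR, x', hx', hisol⟩ := h.exists_isIsolated_quotient hG hp2 hK hx hk hxk
  obtain ⟨i, hvK, hvpK⟩ := exists_pow_notMem_pow_succ_mem hG fun hmem => hx (hK hx' hmem)
  let v : G := x' ^ p ^ i
  have hvR : (v : G ⧸ R) ≠ 1 := fun hv => hvK (hRK.le ((QuotientGroup.eq_one_iff v).1 hv))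
  have hv_isol : IsIsolated p (quotientClass κ R) (v : G ⧸ R) :=
    (h.quotient hR).isIsolated_pow_pow (hG.to_quotient R) hisol hvR
  have hvU : v ∈ U := by
    by_contra hvU
    refine hKU.not_ge ((le_zpowers_pow_of_notMem hG hvU).trans (Subgroup.zpowers_le.2 ?_))
    rwa [← pow_mul, ← pow_succ]
  have mem_R {w : G} (hw : w ∈ K) (hvw : κ (v * w) = κ v) : w ∈ R := by
    refine (QuotientGroup.eq_one_iff w).1 (hv_isol.eq_one ?_
      ((h.quotientClass_mk_eq_iff hR).2 ⟨v, hvw.symm, rfl⟩))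
    have := Subgroup.mem_map_of_mem (QuotientGroup.mk' R) (le_zpowers_pow_of_notMem hG hvK hw)
    rwa [MonoidHom.map_zpowers] at this
  have K_le {M : Subgroup G} (hLM : L ≤ M) (hRM : R ≤ M) : K ≤ M := fun k hk => by
    obtain ⟨l, hl, hkl⟩ := hUK v hvU hvK k hk
    exact (M.mul_mem_cancel_right (hLM hl)).1 (hRM (mem_R (K.mul_mem hk (hLK.le hl)) hkl))
  rcases subgroup_le_total hG L R with hLR | hRL
  · exact hRK.not_ge (K_le hLR le_rfl)
  · exact hLK.not_ge (K_le le_rfl hRL)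

end IsSchurPartition

end Wreath

namespace CohCfg

section BasisRelation

variable {Ω : Type u}

/-- The basis relation of `X` that contains the pair `q`. -/
def basisRel (X : CohCfg Ω) (q : Ω × Ω) : Set (Ω × Ω) :=
  {r | ∃ s ∈ X.S, q ∈ s ∧ r ∈ s}

theorem basisRel_eq {X : CohCfg Ω} {s : Set (Ω × Ω)} (hs : s ∈ X.S) {q : Ω × Ω} (hq : q ∈ s) :
    X.basisRel q = s := by
  refine Subset.antisymm (fun r ⟨t, ht, hqt, hrt⟩ => ?_) fun r hr => ⟨s, hs, hq, hr⟩
  have hts : t = s := not_imp_comm.1 (X.disj t ht s hs) (nonempty_iff_ne_empty.1 ⟨q, hqt, hq⟩)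
  exact hts ▸ hrt

theorem basisRel_mem (X : CohCfg Ω) (q : Ω × Ω) : X.basisRel q ∈ X.S := by
  obtain ⟨s, hs, hq⟩ := X.cover q
  exact (basisRel_eq hs hq).symm ▸ hs

theorem mem_basisRel_self (X : CohCfg Ω) (q : Ω × Ω) : q ∈ X.basisRel q := by
  obtain ⟨s, hs, hq⟩ := X.cover q
  exact ⟨s, hs, hq, hq⟩

end BasisRelation

section Circulant

/-- The class map of the Schur partition attached to a circulant configuration `X`: the label of `x`
is the basis relation that contains `(1, x)`. -/
def classMap {G : Type u} [Group G] (X : CohCfg G) (x : G) : Set (G × G) :=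
  X.basisRel (1, x)

theorem classMap_mem {G : Type u} [Group G] (X : CohCfg G) (x : G) : X.classMap x ∈ X.S :=
  X.basisRel_mem (1, x)

theorem mem_classMap_self {G : Type u} [Group G] (X : CohCfg G) (x : G) :
    (1, x) ∈ X.classMap x :=
  X.mem_basisRel_self (1, x)

variable {G : Type u} [CommGroup G] {X : CohCfg G}

theorem mem_iff_classMap_eq (hc : IsCirculant X) {s : Set (G × G)} (hs : s ∈ X.S) (a b : G) :
    (a, b) ∈ s ↔ X.classMap (a⁻¹ * b) = s := by
  have translate {c d : G} (g : G) (hcd : (c, d) ∈ s) : (c * g, d * g) ∈ s := by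
    rw [← hc g s hs]
    exact mem_image_of_mem _ hcd
  constructor
  · intro hab
    refine basisRel_eq hs ?_
    simpa only [mul_inv_cancel, mul_comm b] using translate a⁻¹ hab
  · rintro rfl
    simpa only [one_mul, inv_mul_cancel_comm] using translate a (X.mem_classMap_self _)

theorem isSchurPartition_classMap (hc : IsCirculant X) : IsSchurPartition X.classMap where
  eq_one_of_eq x hx :=
    (X.diag _ (X.classMap_mem _) ⟨(1, 1), X.mem_classMap_self _, rfl⟩ (1, x)
      (hx ▸ X.mem_classMap_self _)).symm
  inv_eq_inv x y hxy := by
    have mem_conv {z : G} (hz : X.classMap z = X.classMap x) : (z⁻¹, 1) ∈ X.classMap x := by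
      rwa [mem_iff_classMap_eq hc (X.classMap_mem _), inv_inv, mul_one]
    have hconv := X.conv _ (X.classMap_mem x)
    exact (basisRel_eq hconv (mem_conv rfl)).trans (basisRel_eq hconv (mem_conv hxy.symm)).symm
  ncard_eq x y hxy a b := by
    have := X.inum _ (X.classMap_mem a) _ (X.classMap_mem b) _ (X.classMap_mem x)
      (1, x) (X.mem_classMap_self _) (1, y) (hxy ▸ X.mem_classMap_self y)
    simpa only [mem_iff_classMap_eq hc (X.classMap_mem _), inv_one, one_mul] using this

theorem isXGroup_iff_isUnionOfClasses (hc : IsCirculant X) {H : Subgroup G} :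
    IsXGroup X H ↔ IsUnionOfClasses X.classMap (H : Set G) := by
  constructor
  · intro hH x y hxy hx
    have hy : (1, y) ∈ eRelSet H :=
      hH.1 _ (X.classMap_mem _) ⟨(1, x), X.mem_classMap_self _, by simpa [eRelSet] using hx⟩
        (hxy ▸ X.mem_classMap_self y)
    simpa [eRelSet] using hy
  · intro hH
    refine ⟨?_, fun a => by simp [eRelSet], fun q hq => ?_, fun a b c hab hbc => ?_⟩
    · rintro t ht ⟨⟨a, b⟩, hab, habH⟩ ⟨c, d⟩ hcd
      rw [mem_iff_classMap_eq hc ht] at hab hcd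
      exact hH (hab.trans hcd.symm) habH
    · simpa [eRelSet] using H.inv_mem hq
    · simpa [eRelSet, mul_assoc] using H.mul_mem hab hbc

theorem wedgeCond_eRelSet (hc : IsCirculant X) {K : Subgroup G}
    (hK : ∀ x ∉ K, ∀ k ∈ K, X.classMap (x * k) = X.classMap x) :
    WedgeCond X (eRelSet K) (eRelSet K) := by
  rintro s hs hdisj ⟨c, d⟩ hcd a b (hca : c⁻¹ * a ∈ K) (hdb : d⁻¹ * b ∈ K)
  have hcdK : c⁻¹ * d ∉ K := fun hmem => (eq_empty_iff_forall_notMem.1 hdisj) (c, d) ⟨hcd, hmem⟩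
  rw [mem_iff_classMap_eq hc hs] at hcd ⊢
  rw [← hcd, ← hK _ hcdK ((c⁻¹ * a)⁻¹ * (d⁻¹ * b)) (K.mul_mem (K.inv_mem hca) hdb)]
  rw [← mul_assoc, ← div_eq_mul_inv, mul_div_mul_left_eq_div, div_eq_inv_mul, mul_assoc,
    mul_inv_cancel_left]

end Circulant

section SectionPoint

variable {G : Type u} [CommGroup G] {X : CohCfg G} {U L K : Subgroup G} {x y : G}

/-- The coset of `x` as a point of the section `U/L`. -/
def secPoint (L : Subgroup G) (hx : x ∈ U) : Sec (U : Set G) (eRelSet L) :=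
  ⟨eClass (eRelSet L) x, x, hx, rfl⟩

theorem mem_secRel_secPoint (hx : x ∈ U) (hy : y ∈ U) {s : Set (G × G)} (hs : (x, y) ∈ s) :
    (secPoint L hx, secPoint L hy) ∈ secRel (U : Set G) (eRelSet L) s :=
  ⟨x, by simp [secPoint, eClass, eRelSet], y, by simp [secPoint, eClass, eRelSet], hs⟩

theorem mem_secRel_eRelSet_iff (hLK : L ≤ K) (hx : x ∈ U) :
    (secPoint L U.one_mem, secPoint L hx) ∈ secRel (U : Set G) (eRelSet L) (eRelSet K) ↔
      x ∈ K := by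
  constructor
  · rintro ⟨a, ha : 1⁻¹ * a ∈ L, b, hb : x⁻¹ * b ∈ L, hab : a⁻¹ * b ∈ K⟩
    have haK : a ∈ K := hLK (by simpa using ha)
    have hbK : b ∈ K := (K.mul_mem_cancel_left (K.inv_mem haK)).1 hab
    exact inv_mem_iff.1 ((K.mul_mem_cancel_right hbK).1 (hLK hb))
  · exact fun hxK => mem_secRel_secPoint _ _ (by simpa [eRelSet] using hxK)

theorem exists_classMap_mul_eq_of_mem_secRel (hc : IsCirculant X) (hy : y ∈ U)
    (hxy : (secPoint L U.one_mem, secPoint L hy) ∈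
      secRel (U : Set G) (eRelSet L) (X.classMap x)) :
    ∃ l ∈ L, X.classMap (y * l) = X.classMap x := by
  obtain ⟨a, ha : 1⁻¹ * a ∈ L, b, hb : y⁻¹ * b ∈ L, hab⟩ := hxy
  rw [inv_one, one_mul] at ha
  refine ⟨y⁻¹ * b * a⁻¹, L.mul_mem hb (L.inv_mem ha), ?_⟩
  rw [← (mem_iff_classMap_eq hc (X.classMap_mem _) a b).1 hab, mul_assoc, mul_inv_cancel_left,
    mul_comm]

variable {Y : CohCfg (Sec (U : Set G) (eRelSet L))}

theorem secRel_classMap_mem (hY : IsSectionCfg X (U : Set G) (eRelSet L) Y) (hx : x ∈ U) :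
    secRel (U : Set G) (eRelSet L) (X.classMap x) ∈ Y.S := by
  rw [hY]
  exact ⟨_, X.classMap_mem _, rfl, _, mem_secRel_secPoint U.one_mem hx (X.mem_classMap_self _)⟩

theorem isUnionOfClasses_of_isParabolic_secRel (hc : IsCirculant X) (hU : IsXGroup X U)
    (hLK : L ≤ K) (hKU : K ≤ U) (hY : IsSectionCfg X (U : Set G) (eRelSet L) Y)
    (hK : IsParabolic Y (secRel (U : Set G) (eRelSet L) (eRelSet K))) :
    IsUnionOfClasses X.classMap (K : Set G) := by
  intro x y hxy hx
  have hxU : x ∈ U := hKU hx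
  have hyU : y ∈ U := (isXGroup_iff_isUnionOfClasses hc).1 hU hxy hxU
  have hsub := hK.1 _ (secRel_classMap_mem hY hxU) ⟨_,
    mem_secRel_secPoint U.one_mem hxU (X.mem_classMap_self _),
    (mem_secRel_eRelSet_iff hLK hxU).2 hx⟩
  exact (mem_secRel_eRelSet_iff hLK hyU).1
    (hsub (mem_secRel_secPoint _ hyU (hxy ▸ X.mem_classMap_self y)))

theorem exists_classMap_mul_eq_of_wedgeCond (hc : IsCirculant X) (hLK : L ≤ K) (hKU : K ≤ U)
    (hY : IsSectionCfg X (U : Set G) (eRelSet L) Y)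
    (hK : IsParabolic Y (secRel (U : Set G) (eRelSet L) (eRelSet K)))
    (hW : WedgeCond Y (secRel (U : Set G) (eRelSet L) (eRelSet K))
      (secRel (U : Set G) (eRelSet L) (eRelSet K))) (hxU : x ∈ U) (hxK : x ∉ K) {k : G}
    (hk : k ∈ K) : ∃ l ∈ L, X.classMap (x * (k * l)) = X.classMap x := by
  have hxS := secRel_classMap_mem hY hxU
  have hx_mem : (secPoint L U.one_mem, secPoint L hxU) ∈
      secRel (U : Set G) (eRelSet L) (X.classMap x) :=
    mem_secRel_secPoint _ _ (X.mem_classMap_self _)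
  have hdisj : secRel (U : Set G) (eRelSet L) (X.classMap x) ∩
      secRel (U : Set G) (eRelSet L) (eRelSet K) = ∅ := by
    rw [← not_nonempty_iff_eq_empty]
    exact fun hne => hxK ((mem_secRel_eRelSet_iff hLK hxU).1 (hK.1 _ hxS hne hx_mem))
  have hxkU : x * k ∈ U := U.mul_mem hxU (hKU hk)
  simp only [← mul_assoc]
  exact exists_classMap_mul_eq_of_mem_secRel hc hxkU (hW _ hxS hdisj _ hx_mem _ _ (hK.2.1 _)
    (mem_secRel_secPoint hxU hxkU (by simpa [eRelSet] using hk)))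

end SectionPoint

end CohCfg

open CohCfg in
/-- Lemma: let `p ≥ 3` be a prime, `X` a circulant scheme on a cyclic group of
order `p^n`, and `𝔖 = U/L ∈ 𝔖₀(X)`.  If `X_𝔖` is a nontrivial wreath product
(i.e. satisfies the `e(K/L)/e(K/L)`-condition for some `X_𝔖`-group `K/L` with
`L < K < U`), then `X` is a nontrivial wreath product. -/
theorem stmt_19 {G : Type u} [CommGroup G] [IsCyclic G] [Fintype G]
    (p n : ℕ) (hp : p.Prime) (hp3 : 3 ≤ p) (hcard : Fintype.card G = p ^ n)
    (X : CohCfg G) (hs : IsScheme X) (hc : IsCirculant X)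
    (U L : Subgroup G) (hLU : L ≤ U) (hU : IsXGroup X U) (hL : IsXGroup X L)
    (Y : CohCfg (Sec (U : Set G) (eRelSet L)))
    (hY : IsSectionCfg X (U : Set G) (eRelSet L) Y)
    -- X_𝔖 is a nontrivial wreath product
    (hwr : ∃ K : Subgroup G, L ≤ K ∧ K ≤ U ∧ K ≠ L ∧ K ≠ U ∧
       IsParabolic Y (secRel (U : Set G) (eRelSet L) (eRelSet K)) ∧
       WedgeCond Y (secRel (U : Set G) (eRelSet L) (eRelSet K))
                   (secRel (U : Set G) (eRelSet L) (eRelSet K))) :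
    ∃ K : Subgroup G, IsXGroup X K ∧ K ≠ ⊥ ∧ K ≠ ⊤ ∧
      WedgeCond X (eRelSet K) (eRelSet K) := by
  obtain ⟨K, hLK, hKU, hKL', hKU', hK, hW⟩ := hwr
  have : Fact p.Prime := ⟨hp⟩
  have hG : IsPGroup p G := IsPGroup.of_card (Nat.card_eq_fintype_card.trans hcard)
  have hK_classes := isUnionOfClasses_of_isParabolic_secRel hc hU hLK hKU hY hK
  have hLK_lt : L < K := hLK.lt_of_ne' hKL'
  have hKU_lt : K < U := hKU.lt_of_ne hKU'
  refine ⟨K, (isXGroup_iff_isUnionOfClasses hc).2 hK_classes, hLK_lt.ne_bot, hKU_lt.ne_top,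
    wedgeCond_eRelSet hc fun x hx k hk => ?_⟩
  exact (isSchurPartition_classMap hc).mul_eq_of_section_wreath hG (by lia) hLK_lt hKU_lt hK_classes
    (fun y hyU hyK k hk => exists_classMap_mul_eq_of_wedgeCond hc hLK hKU hY hK hW hyU hyK hk) hx hk
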